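/- Let α ∈ (3/2, 2), T > 0, let (λ_n)_{n≥1} be a sequence of positive reals, and let (a_n), (b_n) ∈ ℓ²(ℕ). Then the map t ↦ (a_n t E_{α,2}(−λ_n t^α) + b_n E_α(−λ_n t^α))_{n≥1} is continuous from [0,T] into ℓ²(ℕ), and its value at t = 0 is the sequence (b_n)_{n≥1}. (In the PDE setting this says that I_{0+}^{2−α} u ∈ C([0,T]; L²(Ω)) for the weak solution u of the Riemann–Liouville fractional wave equation, and that the initial condition D_{0+}^{α−2} u(0,·) = u₂ holds.) -/

import Mathlib

/-- The Mittag-Leffler function of real parameters `α, β > 0` at a real argument: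
`E_{α,β}(x) = Σ_{k=0}^∞ x^k / Γ(αk + β)`. -/
noncomputable def mittagLeffler (α β x : ℝ) : ℝ :=
  ∑' k : ℕ, x ^ k / Real.Gamma (α * k + β)

/-! For `x ≤ 0` the function `u(s) = E_α(x s^α)` solves `u' = x I^{α-1} u`, `u(0) = 1`, where
`I^q` is the Riemann–Liouville fractional integral. For `0 < q < 1` the kernel `(s - r)^{q-1}` is
a positive mixture of the exponentials `e^{-w(s-r)}`, and `y = e^{-w·} * u` satisfies
`y' + w y = u`, hence `∫ u y = y(t)²/2 + w ∫ y² ≥ 0`. Averaging over `w` gives `∫ u I^q u ≥ 0`, so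
`u(1)² - 1 = 2x ∫₀¹ u I^{α-1} u ≤ 0`, that is, `|E_α(x)| ≤ 1`. As `E_{α,2}(x)` is the mean of `u`
over `[0, 1]`, also `|E_{α,2}(x)| ≤ 1`. The coordinates of the map are therefore continuous and,
for times below `M`, dominated by `M |a_i| + |b_i|`, and dominated convergence in `ℓᵖ` applies. -/

open MeasureTheory Set Filter Topology
open scoped ENNReal NNReal Interval

section MittagLeffler

variable {α β : ℝ}

theorem rpow_mul_exp_neg_le_Gamma_add_one {M s : ℝ} (hM : 0 ≤ M) (hs : 0 ≤ s) :
    M ^ s * Real.exp (-M) ≤ Real.Gamma (s + 1) := by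
  have hint : IntegrableOn (fun x : ℝ => Real.exp (-x) * x ^ s) (Ioi 0) := by
    simpa only [add_sub_cancel_right] using Real.GammaIntegral_convergent (by linarith : 0 < s + 1)
  have hsub : Ioi M ⊆ Ioi 0 := Ioi_subset_Ioi hM
  calc M ^ s * Real.exp (-M) = ∫ x in Ioi M, Real.exp (-x) * M ^ s := by
        rw [integral_mul_const, integral_exp_neg_Ioi, mul_comm]
    _ ≤ ∫ x in Ioi M, Real.exp (-x) * x ^ s := by
        refine setIntegral_mono_on ((integrableOn_exp_neg_Ioi M).mul_const _) (hint.mono_set hsub)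
          measurableSet_Ioi fun x hx => ?_
        have hMx : M ≤ x := le_of_lt hx
        gcongr
    _ ≤ ∫ x in Ioi 0, Real.exp (-x) * x ^ s := by
        refine setIntegral_mono_set hint ?_ hsub.eventuallyLE
        filter_upwards [ae_restrict_mem measurableSet_Ioi] with x hx
        exact mul_nonneg (Real.exp_pos _).le (Real.rpow_nonneg (le_of_lt hx) _)
    _ = Real.Gamma (s + 1) := by
        rw [Real.Gamma_eq_integral (by linarith), add_sub_cancel_right]

theorem inv_Gamma_le {M s : ℝ} (hM : 0 < M) (hs : 0 < s) :
    (Real.Gamma s)⁻¹ ≤ s * Real.exp M * M ^ (-s) := by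
  have hΓ := Real.Gamma_pos_of_pos hs
  have h := rpow_mul_exp_neg_le_Gamma_add_one hM.le hs.le
  rw [Real.Gamma_add_one hs.ne'] at h
  calc (Real.Gamma s)⁻¹ = (M ^ s * Real.exp (-M)) * (Real.Gamma s)⁻¹ * (Real.exp M * M ^ (-s)) := by
        rw [Real.exp_neg, Real.rpow_neg hM.le]
        field_simp
    _ ≤ (s * Real.Gamma s) * (Real.Gamma s)⁻¹ * (Real.exp M * M ^ (-s)) := by gcongr
    _ = s * Real.exp M * M ^ (-s) := by rw [mul_inv_cancel_right₀ hΓ.ne', mul_assoc]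

theorem Gamma_mul_natCast_add_pos (hα : 0 < α) (hβ : 0 < β) (k : ℕ) :
    0 < Real.Gamma (α * k + β) :=
  Real.Gamma_pos_of_pos (by positivity)

theorem summable_pow_div_Gamma (hα : 0 < α) (hβ : 0 < β) (x : ℝ) :
    Summable fun k : ℕ => x ^ k / Real.Gamma (α * k + β) := by
  obtain ⟨M, hM, hMα⟩ : ∃ M : ℝ, 0 < M ∧ M ^ α = |x| + 1 :=
    ⟨(|x| + 1) ^ α⁻¹, by positivity, Real.rpow_inv_rpow (by positivity) hα.ne'⟩
  set ρ : ℝ := |x| / (|x| + 1)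
  have hρ : ‖ρ‖ < 1 := by
    rw [Real.norm_of_nonneg (by positivity), div_lt_one (by positivity)]
    linarith
  have hsum : Summable fun k : ℕ =>
      Real.exp M * M ^ (-β) * (α * ((k : ℝ) ^ 1 * ρ ^ k) + β * ρ ^ k) :=
    (((summable_pow_mul_geometric_of_norm_lt_one 1 hρ).mul_left α).add
      ((summable_geometric_of_norm_lt_one hρ).mul_left β)).mul_left _
  refine hsum.of_norm_bounded fun k => ?_
  have hΓ := Gamma_mul_natCast_add_pos hα hβ k
  have hpow : M ^ (-(α * k + β)) = M ^ (-β) * ((|x| + 1) ^ k)⁻¹ := by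
    rw [← hMα, ← Real.rpow_mul_natCast hM.le, ← Real.rpow_neg hM.le, ← Real.rpow_add hM]
    ring_nf
  calc ‖x ^ k / Real.Gamma (α * k + β)‖ = |x| ^ k * (Real.Gamma (α * k + β))⁻¹ := by
        rw [norm_div, norm_pow, Real.norm_eq_abs, Real.norm_of_nonneg hΓ.le, div_eq_mul_inv]
    _ ≤ |x| ^ k * ((α * k + β) * Real.exp M * M ^ (-(α * k + β))) := by
        gcongr
        exact inv_Gamma_le hM (by positivity)
    _ = _ := by
        rw [hpow, div_pow, pow_one]
        ring

theorem hasSum_mittagLeffler (hα : 0 < α) (hβ : 0 < β) (x : ℝ) :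
    HasSum (fun k : ℕ => x ^ k / Real.Gamma (α * k + β)) (mittagLeffler α β x) :=
  (summable_pow_div_Gamma hα hβ x).hasSum

theorem continuous_mittagLeffler (hα : 0 < α) (hβ : 0 < β) : Continuous (mittagLeffler α β) := by
  refine continuous_iff_continuousAt.2 fun x => ?_
  have hball : ContinuousOn (mittagLeffler α β) (Metric.ball 0 (|x| + 1)) := by
    refine continuousOn_tsum (fun k => by fun_prop)
      (summable_pow_div_Gamma hα hβ (|x| + 1)) fun k y hy => ?_
    have hΓ := Gamma_mul_natCast_add_pos hα hβ k
    have hy' : |y| ≤ |x| + 1 := by simpa using (mem_ball_zero_iff.1 hy).le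
    rw [norm_div, norm_pow, Real.norm_eq_abs, Real.norm_of_nonneg hΓ.le]
    gcongr
  exact hball.continuousAt (Metric.isOpen_ball.mem_nhds (by simp))

theorem continuous_mittagLeffler_mul_rpow (hα : 0 < α) (hβ : 0 < β) (c : ℝ) :
    Continuous fun r : ℝ => mittagLeffler α β (c * r ^ α) :=
  (continuous_mittagLeffler hα hβ).comp
    ((Real.continuous_rpow_const hα.le).const_mul c)

theorem mittagLeffler_eq_inv_Gamma_add (hα : 0 < α) (hβ : 0 < β) (x : ℝ) :
    mittagLeffler α β x = (Real.Gamma β)⁻¹ + x * mittagLeffler α (α + β) x := by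
  have htail := (hasSum_mittagLeffler hα (add_pos hα hβ) x).mul_left x
  have hterm (k : ℕ) : x * (x ^ k / Real.Gamma (α * k + (α + β)))
      = x ^ (k + 1) / Real.Gamma (α * ↑(k + 1) + β) := by
    rw [pow_succ', mul_div_assoc, show α * ↑(k + 1) + β = α * k + (α + β) by push_cast; ring]
  simp_rw [hterm] at htail
  have h := (hasSum_mittagLeffler hα hβ x).unique htail.zero_add
  simpa using h

theorem mittagLeffler_zero (hα : 0 < α) (hβ : 0 < β) :
    mittagLeffler α β 0 = (Real.Gamma β)⁻¹ := by
  simpa using mittagLeffler_eq_inv_Gamma_add hα hβ 0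

theorem hasSum_rpow_mul_mittagLeffler (hα : 0 < α) (hβ : 0 < β) (c : ℝ) {r : ℝ} (hr : 0 < r) :
    HasSum (fun k : ℕ => c ^ k / Real.Gamma (α * k + β) * r ^ (α * k + β - 1))
      (r ^ (β - 1) * mittagLeffler α β (c * r ^ α)) := by
  refine ((hasSum_mittagLeffler hα hβ (c * r ^ α)).mul_left (r ^ (β - 1))).congr_fun fun k => ?_
  rw [mul_pow, ← Real.rpow_mul_natCast hr.le, add_sub_assoc, Real.rpow_add hr]
  ring

end MittagLeffler

/-- The Riemann–Liouville fractional integral `I_{0+}^q u` of order `q`, evaluated at `s`. It turns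
the equation of `E_α(c s^α)` into `u' = c I^{α-1} u`. The value is junk unless `q > 0` and the
integrand is integrable. -/
noncomputable def fractionalIntegral (q : ℝ) (u : ℝ → ℝ) (s : ℝ) : ℝ :=
  (Real.Gamma q)⁻¹ * ∫ r in (0 : ℝ)..s, (s - r) ^ (q - 1) * u r

section FractionalIntegral

variable {α β p q s : ℝ}

theorem integral_sub_rpow_mul_rpow (hp : 0 < p) (hq : 0 < q) (hs : 0 < s) :
    ∫ r in (0 : ℝ)..s, (s - r) ^ (q - 1) * r ^ (p - 1)
      = s ^ (p + q - 1) * ProbabilityTheory.beta p q := by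
  have hbeta : Complex.betaIntegral p q = (ProbabilityTheory.beta p q : ℂ) := by
    rw [Complex.betaIntegral_eq_Gamma_mul_div _ _ (by simpa) (by simpa), ProbabilityTheory.beta]
    push_cast [← Complex.Gamma_ofReal]
    rfl
  have hscaled := Complex.betaIntegral_scaled p q hs
  rw [hbeta] at hscaled
  apply Complex.ofReal_injective
  rw [← intervalIntegral.integral_ofReal, Complex.ofReal_mul, Complex.ofReal_cpow hs.le]
  push_cast
  rw [← hscaled]
  refine intervalIntegral.integral_congr fun r hr => ?_
  rw [uIcc_of_le hs.le] at hr
  simp only [Complex.ofReal_cpow hr.1, Complex.ofReal_cpow (sub_nonneg.2 hr.2)]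
  push_cast
  ring

theorem intervalIntegrable_sub_rpow_mul_rpow (hp : 0 < p) (hq : 0 < q) (hs : 0 < s) :
    IntervalIntegrable (fun r : ℝ => (s - r) ^ (q - 1) * r ^ (p - 1)) volume 0 s := by
  rw [intervalIntegrable_iff_integrableOn_Ioc_of_le hs.le]
  apply Integrable.of_integral_ne_zero
  rw [← intervalIntegral.integral_of_le hs.le, integral_sub_rpow_mul_rpow hp hq hs]
  have := ProbabilityTheory.beta_pos hp hq
  positivity

theorem fractionalIntegral_rpow (hp : 0 < p) (hq : 0 < q) (hs : 0 < s) :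
    fractionalIntegral q (fun r => r ^ (p - 1)) s
      = Real.Gamma p / Real.Gamma (p + q) * s ^ (p + q - 1) := by
  have hΓ := (Real.Gamma_pos_of_pos hq).ne'
  rw [fractionalIntegral, integral_sub_rpow_mul_rpow hp hq hs, ProbabilityTheory.beta]
  field_simp

theorem fractionalIntegral_one (u : ℝ → ℝ) (s : ℝ) :
    fractionalIntegral 1 u s = ∫ r in (0 : ℝ)..s, u r := by
  simp [fractionalIntegral]

theorem fractionalIntegral_rpow_mul_mittagLeffler (hα : 0 < α) (hβ : 0 < β) (hq : 0 < q)
    (c : ℝ) (hs : 0 < s) :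
    fractionalIntegral q (fun r => r ^ (β - 1) * mittagLeffler α β (c * r ^ α)) s
      = s ^ (β + q - 1) * mittagLeffler α (β + q) (c * s ^ α) := by
  let F (c : ℝ) (k : ℕ) (r : ℝ) : ℝ :=
    (s - r) ^ (q - 1) * (c ^ k / Real.Gamma (α * k + β) * r ^ (α * k + β - 1))
  have hFsum (c : ℝ) {r : ℝ} (hr : r ∈ Ι 0 s) : HasSum (F c · r)
      ((s - r) ^ (q - 1) * (r ^ (β - 1) * mittagLeffler α β (c * r ^ α))) := by
    rw [uIoc_of_le hs.le] at hr
    exact (hasSum_rpow_mul_mittagLeffler hα hβ c hr.1).mul_left _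
  have hnorm (k : ℕ) {r : ℝ} (hr : r ∈ Ι 0 s) : ‖F c k r‖ ≤ F |c| k r := by
    rw [uIoc_of_le hs.le] at hr
    have hΓ := Gamma_mul_natCast_add_pos hα hβ k
    simp only [F, norm_mul, norm_div, norm_pow, Real.norm_eq_abs c,
      Real.norm_of_nonneg hΓ.le, Real.norm_of_nonneg (Real.rpow_nonneg hr.1.le _),
      Real.norm_of_nonneg (Real.rpow_nonneg (sub_nonneg.2 hr.2) _), le_refl]
  have hdom : IntervalIntegrable (fun r => ∑' k, F |c| k r) volume 0 s := by
    refine ((intervalIntegrable_sub_rpow_mul_rpow hβ hq hs).mul_continuousOn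
      (continuous_mittagLeffler_mul_rpow hα hβ |c|).continuousOn).congr fun r hr => ?_
    simp only [(hFsum |c| hr).tsum_eq, mul_assoc]
  have hinterchange := (intervalIntegral.hasSum_integral_of_dominated_convergence
    (F := F c) (F |c|) (fun k => by fun_prop) (fun k => ae_of_all _ fun r hr => hnorm k hr)
    (ae_of_all _ fun r hr => (hFsum |c| hr).summable) hdom
    (ae_of_all _ fun r hr => hFsum c hr)).mul_left (Real.Gamma q)⁻¹
  refine hinterchange.unique
    ((hasSum_rpow_mul_mittagLeffler hα (add_pos hβ hq) c hs).congr_fun fun k => ?_)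
  have hp : 0 < α * k + β := by positivity
  have hterm := fractionalIntegral_rpow hp hq hs
  have hΓ := (Gamma_mul_natCast_add_pos hα hβ k).ne'
  simp only [fractionalIntegral] at hterm
  simp only [F, mul_left_comm _ (c ^ k / _), intervalIntegral.integral_const_mul, hterm]
  rw [← add_assoc]
  field_simp

theorem fractionalIntegral_mittagLeffler_one (hα : 0 < α) (hq : 0 < q) (c : ℝ) (hs : 0 < s) :
    fractionalIntegral q (fun r => mittagLeffler α 1 (c * r ^ α)) s
      = s ^ q * mittagLeffler α (1 + q) (c * s ^ α) := by
  simpa using fractionalIntegral_rpow_mul_mittagLeffler hα one_pos hq c hs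

theorem integral_rpow_mul_mittagLeffler (hα : 0 < α) (hβ : 0 < β) (c : ℝ) (hs : 0 < s) :
    ∫ r in (0 : ℝ)..s, r ^ (β - 1) * mittagLeffler α β (c * r ^ α)
      = s ^ β * mittagLeffler α (β + 1) (c * s ^ α) := by
  simpa [fractionalIntegral_one] using
    fractionalIntegral_rpow_mul_mittagLeffler hα hβ one_pos c hs

theorem hasDerivAt_mittagLeffler_one_mul_rpow (hα : 0 < α) (c : ℝ) (hs : 0 < s) :
    HasDerivAt (fun r => mittagLeffler α 1 (c * r ^ α))
      (c * (s ^ (α - 1) * mittagLeffler α α (c * s ^ α))) s := by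
  let g : ℝ → ℝ := fun r => r ^ (α - 1) * mittagLeffler α α (c * r ^ α)
  have hE := continuous_mittagLeffler_mul_rpow hα hα c
  have hg : ContinuousOn g (Ioi 0) := fun r hr =>
    ((Real.continuousAt_rpow_const r _ (.inl (ne_of_gt hr))).mul hE.continuousAt).continuousWithinAt
  have hint : IntervalIntegrable g volume 0 s :=
    (intervalIntegral.intervalIntegrable_rpow' (by linarith)).mul_continuousOn hE.continuousOn
  have hderiv : HasDerivAt (fun r => 1 + c * ∫ x in (0 : ℝ)..r, g x) (c * g s) s :=
    ((intervalIntegral.integral_hasDerivAt_right hint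
      (hg.stronglyMeasurableAtFilter isOpen_Ioi s hs)
      (hg.continuousAt (Ioi_mem_nhds hs))).const_mul c).const_add 1
  refine hderiv.congr_of_eventuallyEq ?_
  filter_upwards [Ioi_mem_nhds hs] with r hr
  rw [integral_rpow_mul_mittagLeffler hα hα c hr, mittagLeffler_eq_inv_Gamma_add hα one_pos,
    Real.Gamma_one, inv_one, mul_assoc]

end FractionalIntegral

/-- The causal convolution of `u` with `e^{-w ·}`, i.e. the solution of `y' + w y = u`, `y(0) = 0`,
evaluated at `s`. It is the building block of the diffusive representation of
`fractionalIntegral`. -/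
noncomputable def expConvolution (w : ℝ) (u : ℝ → ℝ) (s : ℝ) : ℝ :=
  ∫ r in (0 : ℝ)..s, Real.exp (-((s - r) * w)) * u r

section ExpConvolution

variable {u : ℝ → ℝ} {w s t : ℝ}

theorem continuous_uncurry_expConvolution (hu : Continuous u) :
    Continuous fun p : ℝ × ℝ => expConvolution p.2 u p.1 := by
  apply intervalIntegral.continuous_parametric_intervalIntegral_of_continuous
    (f := fun (p : ℝ × ℝ) r => Real.exp (-((p.1 - r) * p.2)) * u r)
  · simp only [Function.uncurry_def]
    fun_prop
  · fun_prop

theorem continuous_expConvolution (hu : Continuous u) (w : ℝ) : Continuous (expConvolution w u) :=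
  (continuous_uncurry_expConvolution hu).comp (by fun_prop : Continuous fun s : ℝ => (s, w))

theorem hasDerivAt_expConvolution (hu : Continuous u) (w s : ℝ) :
    HasDerivAt (expConvolution w u) (u s - w * expConvolution w u s) s := by
  have hfactor : expConvolution w u =
      fun s => Real.exp (-(s * w)) * ∫ r in (0 : ℝ)..s, Real.exp (r * w) * u r := by
    funext s
    rw [expConvolution, ← intervalIntegral.integral_const_mul]
    refine intervalIntegral.integral_congr fun r _ => ?_
    simp only [← mul_assoc, ← Real.exp_add]
    ring_nf
  have hint : HasDerivAt (fun s => ∫ r in (0 : ℝ)..s, Real.exp (r * w) * u r)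
      (Real.exp (s * w) * u s) s :=
    ((by fun_prop : Continuous fun r => Real.exp (r * w) * u r).integral_hasStrictDerivAt
      0 s).hasDerivAt
  have hexp : HasDerivAt (fun s : ℝ => Real.exp (-(s * w))) (Real.exp (-(s * w)) * -w) s := by
    simpa using ((hasDerivAt_id s).mul_const w).neg.exp
  have hcancel : Real.exp (-(s * w)) * Real.exp (s * w) = 1 := by
    rw [← Real.exp_add, neg_add_cancel, Real.exp_zero]
  rw [hfactor]
  refine (hexp.mul hint).congr_deriv ?_
  linear_combination u s * hcancel

-- Multiply `y' + w y = u` by `y` and integrate.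
theorem integral_mul_expConvolution (hu : Continuous u) (w t : ℝ) :
    ∫ s in (0 : ℝ)..t, u s * expConvolution w u s
      = expConvolution w u t ^ 2 / 2 + w * ∫ s in (0 : ℝ)..t, expConvolution w u s ^ 2 := by
  have hy := continuous_expConvolution hu w
  have hderiv (s : ℝ) : HasDerivAt (fun s => expConvolution w u s ^ 2 / 2)
      (u s * expConvolution w u s - w * expConvolution w u s ^ 2) s :=
    (((hasDerivAt_expConvolution hu w s).pow 2).div_const 2).congr_deriv (by
      simp only [Nat.cast_ofNat, Nat.add_one_sub_one, pow_one]
      ring)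
  have hftc := intervalIntegral.integral_eq_sub_of_hasDerivAt (a := 0) (b := t)
    (fun s _ => hderiv s) (Continuous.intervalIntegrable (by fun_prop) _ _)
  rw [intervalIntegral.integral_sub (Continuous.intervalIntegrable (by fun_prop) _ _)
    (Continuous.intervalIntegrable (by fun_prop) _ _),
    intervalIntegral.integral_const_mul] at hftc
  have hzero : expConvolution w u 0 = 0 := intervalIntegral.integral_same
  rw [hzero] at hftc
  linarith

theorem integral_mul_expConvolution_nonneg (hu : Continuous u) (hw : 0 ≤ w) (ht : 0 ≤ t) :
    0 ≤ ∫ s in (0 : ℝ)..t, u s * expConvolution w u s := by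
  rw [integral_mul_expConvolution hu]
  have := intervalIntegral.integral_nonneg (μ := volume) ht
    fun s _ => sq_nonneg (expConvolution w u s)
  positivity

theorem abs_expConvolution_le {M : ℝ} (hM : ∀ r ∈ Icc 0 t, |u r| ≤ M) (hs : 0 ≤ s) (hst : s ≤ t) :
    |expConvolution w u s| ≤ M * expConvolution w (fun _ => 1) t := by
  have hM0 : 0 ≤ M := (abs_nonneg _).trans (hM 0 ⟨le_rfl, hs.trans hst⟩)
  have hreflect (t : ℝ) : ∫ r in (0 : ℝ)..t, Real.exp (-((t - r) * w))
      = ∫ x in (0 : ℝ)..t, Real.exp (-(x * w)) := by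
    simpa using intervalIntegral.integral_comp_sub_left (a := 0) (b := t)
      (fun x => Real.exp (-(x * w))) t
  calc |expConvolution w u s| ≤ ∫ r in (0 : ℝ)..s, Real.exp (-((s - r) * w)) * M := by
        rw [expConvolution, ← Real.norm_eq_abs]
        refine intervalIntegral.norm_integral_le_of_norm_le hs (ae_of_all _ fun r hr => ?_)
          (Continuous.intervalIntegrable (by fun_prop) _ _)
        rw [norm_mul, Real.norm_eq_abs, Real.abs_exp]
        gcongr
        exact hM r ⟨hr.1.le, hr.2.trans hst⟩
    _ = M * ∫ x in (0 : ℝ)..s, Real.exp (-(x * w)) := by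
        rw [intervalIntegral.integral_mul_const, hreflect, mul_comm]
    _ ≤ M * ∫ x in (0 : ℝ)..t, Real.exp (-(x * w)) := by
        gcongr
        exact intervalIntegral.integral_mono_interval le_rfl hs hst
          (ae_of_all _ fun x => (Real.exp_pos _).le)
          (Continuous.intervalIntegrable (by fun_prop) _ _)
    _ = M * expConvolution w (fun _ => 1) t := by simp [expConvolution, hreflect]

end ExpConvolution

section DiffusiveRepresentation

variable {u : ℝ → ℝ} {q s t : ℝ}

theorem integral_rpow_neg_mul_exp_neg_mul {d : ℝ} (hq : q < 1) (hd : 0 < d) :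
    ∫ w in Ioi (0 : ℝ), w ^ (-q) * Real.exp (-(d * w)) = d ^ (q - 1) * Real.Gamma (1 - q) := by
  have h := Real.integral_rpow_mul_exp_neg_mul_Ioi (sub_pos.2 hq) hd
  rw [one_div, Real.inv_rpow hd.le, ← Real.rpow_neg hd.le, neg_sub] at h
  rw [← h]
  ring_nf

theorem integrableOn_rpow_neg_mul_exp_neg_mul {d : ℝ} (hq : q < 1) (hd : 0 < d) :
    IntegrableOn (fun w : ℝ => w ^ (-q) * Real.exp (-(d * w))) (Ioi 0) := by
  apply Integrable.of_integral_ne_zero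
  rw [integral_rpow_neg_mul_exp_neg_mul hq hd]
  have := Real.Gamma_pos_of_pos (sub_pos.2 hq)
  positivity

theorem integrable_rpow_neg_mul_exp_neg_mul_prod (hu : Continuous u) (hq0 : 0 < q) (hq1 : q < 1)
    (hs : 0 < s) :
    Integrable (fun p : ℝ × ℝ => p.2 ^ (-q) * (Real.exp (-((s - p.1) * p.2)) * u p.1))
      ((volume.restrict (Ioo 0 s)).prod (volume.restrict (Ioi 0))) := by
  have := hu.measurable
  rw [integrable_prod_iff (Measurable.aestronglyMeasurable (by fun_prop))]
  constructor
  · filter_upwards [ae_restrict_mem measurableSet_Ioo] with r hr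
    simpa only [mul_assoc] using
      (integrableOn_rpow_neg_mul_exp_neg_mul hq1 (sub_pos.2 hr.2)).mul_const (u r)
  · have hker : IntervalIntegrable (fun r => (s - r) ^ (q - 1)) volume 0 s := by
      simpa using intervalIntegrable_sub_rpow_mul_rpow one_pos hq0 hs
    have hint := (hker.mul_continuousOn hu.abs.continuousOn).const_mul (Real.Gamma (1 - q))
    rw [intervalIntegrable_iff_integrableOn_Ioo_of_le hs.le] at hint
    refine hint.congr ?_
    filter_upwards [ae_restrict_mem measurableSet_Ioo] with r hr
    calc Real.Gamma (1 - q) * ((s - r) ^ (q - 1) * |u r|)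
        = ∫ w in Ioi (0 : ℝ), w ^ (-q) * Real.exp (-((s - r) * w)) * |u r| := by
          rw [integral_mul_const, integral_rpow_neg_mul_exp_neg_mul hq1 (sub_pos.2 hr.2)]
          ring
      _ = ∫ w in Ioi (0 : ℝ), ‖w ^ (-q) * (Real.exp (-((s - r) * w)) * u r)‖ := by
          refine setIntegral_congr_fun measurableSet_Ioi fun w hw => ?_
          have := Real.rpow_nonneg (le_of_lt hw) (-q)
          simp only [norm_mul, Real.norm_eq_abs, Real.abs_exp, abs_of_nonneg this, mul_assoc]

theorem integral_Ioo_rpow_neg_mul_exp_neg_mul (hs : 0 ≤ s) (w : ℝ) :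
    ∫ r in Ioo 0 s, w ^ (-q) * (Real.exp (-((s - r) * w)) * u r)
      = w ^ (-q) * expConvolution w u s := by
  rw [expConvolution, intervalIntegral.integral_of_le hs, integral_Ioc_eq_integral_Ioo,
    integral_const_mul]

theorem integrableOn_rpow_neg_mul_expConvolution (hu : Continuous u) (hq0 : 0 < q) (hq1 : q < 1)
    (hs : 0 < s) : IntegrableOn (fun w => w ^ (-q) * expConvolution w u s) (Ioi 0) := by
  simpa only [IntegrableOn, integral_Ioo_rpow_neg_mul_exp_neg_mul hs.le] using
    (integrable_rpow_neg_mul_exp_neg_mul_prod hu hq0 hq1 hs).integral_prod_right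

theorem integral_rpow_neg_mul_expConvolution (hu : Continuous u) (hq0 : 0 < q) (hq1 : q < 1)
    (hs : 0 < s) :
    ∫ w in Ioi (0 : ℝ), w ^ (-q) * expConvolution w u s
      = Real.Gamma (1 - q) * Real.Gamma q * fractionalIntegral q u s := by
  have hΓ := (Real.Gamma_pos_of_pos hq0).ne'
  have hlaplace {r : ℝ} (hr : r ∈ Ioo 0 s) :
      ∫ w in Ioi (0 : ℝ), w ^ (-q) * (Real.exp (-((s - r) * w)) * u r)
        = Real.Gamma (1 - q) * ((s - r) ^ (q - 1) * u r) := by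
    simp_rw [← mul_assoc (_ ^ (-q))]
    rw [integral_mul_const, integral_rpow_neg_mul_exp_neg_mul hq1 (sub_pos.2 hr.2)]
    ring
  calc ∫ w in Ioi (0 : ℝ), w ^ (-q) * expConvolution w u s
      = ∫ r in Ioo 0 s, ∫ w in Ioi (0 : ℝ),
          w ^ (-q) * (Real.exp (-((s - r) * w)) * u r) := by
        simp_rw [← integral_Ioo_rpow_neg_mul_exp_neg_mul hs.le]
        exact (integral_integral_swap
          (integrable_rpow_neg_mul_exp_neg_mul_prod hu hq0 hq1 hs)).symm
    _ = Real.Gamma (1 - q) * ∫ r in (0 : ℝ)..s, (s - r) ^ (q - 1) * u r := by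
        rw [setIntegral_congr_fun measurableSet_Ioo fun r hr => hlaplace hr, integral_const_mul,
          intervalIntegral.integral_of_le hs.le, integral_Ioc_eq_integral_Ioo]
    _ = Real.Gamma (1 - q) * Real.Gamma q * fractionalIntegral q u s := by
        rw [fractionalIntegral]
        field_simp

theorem integrable_mul_rpow_neg_mul_expConvolution_prod (hu : Continuous u) (hq0 : 0 < q)
    (hq1 : q < 1) (ht : 0 < t) :
    Integrable (fun p : ℝ × ℝ => u p.1 * (p.2 ^ (-q) * expConvolution p.2 u p.1))
      ((volume.restrict (Ioc 0 t)).prod (volume.restrict (Ioi 0))) := by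
  obtain ⟨M, hM⟩ := isCompact_Icc.exists_bound_of_continuousOn (s := Icc 0 t) hu.continuousOn
  have hM0 : 0 ≤ M := (norm_nonneg _).trans (hM 0 ⟨le_rfl, ht.le⟩)
  have hdom : Integrable
      (fun p : ℝ × ℝ => M * M * (p.2 ^ (-q) * expConvolution p.2 (fun _ => 1) t))
      ((volume.restrict (Ioc 0 t)).prod (volume.restrict (Ioi 0))) :=
    Integrable.mul_prod (f := fun _ => M * M) (integrable_const _)
      (integrableOn_rpow_neg_mul_expConvolution continuous_const hq0 hq1 ht)
  refine hdom.mono' ?_ ?_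
  · have := hu.measurable
    have := (continuous_uncurry_expConvolution hu).measurable
    exact Measurable.aestronglyMeasurable (by fun_prop)
  · rw [Measure.prod_restrict]
    filter_upwards [ae_restrict_mem (measurableSet_Ioc.prod measurableSet_Ioi)] with p ⟨hs, hw⟩
    have hpow := Real.rpow_nonneg (le_of_lt hw) (-q)
    calc ‖u p.1 * (p.2 ^ (-q) * expConvolution p.2 u p.1)‖
        = |u p.1| * (p.2 ^ (-q) * |expConvolution p.2 u p.1|) := by
          rw [norm_mul, norm_mul, Real.norm_of_nonneg hpow, Real.norm_eq_abs, Real.norm_eq_abs]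
      _ ≤ M * (p.2 ^ (-q) * (M * expConvolution p.2 (fun _ => 1) t)) := by
          gcongr
          · exact hM _ ⟨hs.1.le, hs.2⟩
          · exact abs_expConvolution_le hM hs.1.le hs.2
      _ = M * M * (p.2 ^ (-q) * expConvolution p.2 (fun _ => 1) t) := by ring

theorem integral_mul_fractionalIntegral_nonneg (hu : Continuous u) (hq0 : 0 < q) (hq1 : q ≤ 1)
    (ht : 0 < t) : 0 ≤ ∫ s in (0 : ℝ)..t, u s * fractionalIntegral q u s := by
  rcases hq1.eq_or_lt with rfl | hq1
  · simpa [fractionalIntegral_one, expConvolution] using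
      integral_mul_expConvolution_nonneg hu le_rfl ht.le
  have hΓ : 0 < Real.Gamma (1 - q) * Real.Gamma q :=
    mul_pos (Real.Gamma_pos_of_pos (sub_pos.2 hq1)) (Real.Gamma_pos_of_pos hq0)
  refine nonneg_of_mul_nonneg_right ?_ hΓ
  calc 0 ≤ ∫ w in Ioi (0 : ℝ), w ^ (-q) * ∫ s in (0 : ℝ)..t, u s * expConvolution w u s :=
        setIntegral_nonneg measurableSet_Ioi fun w hw =>
          mul_nonneg (Real.rpow_nonneg (le_of_lt hw) _)
            (integral_mul_expConvolution_nonneg hu (le_of_lt hw) ht.le)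
    _ = ∫ w in Ioi (0 : ℝ), ∫ s in Ioc 0 t, u s * (w ^ (-q) * expConvolution w u s) := by
        simp_rw [intervalIntegral.integral_of_le ht.le, mul_left_comm (u _), integral_const_mul]
    _ = ∫ s in Ioc 0 t, u s * ∫ w in Ioi (0 : ℝ), w ^ (-q) * expConvolution w u s := by
        rw [← integral_integral_swap
          (integrable_mul_rpow_neg_mul_expConvolution_prod hu hq0 hq1 ht)]
        simp_rw [integral_const_mul]
    _ = ∫ s in Ioc 0 t, Real.Gamma (1 - q) * Real.Gamma q *
          (u s * fractionalIntegral q u s) := by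
        refine setIntegral_congr_fun measurableSet_Ioc fun s hs => ?_
        simp only [integral_rpow_neg_mul_expConvolution hu hq0 hq1 hs.1]
        ring
    _ = _ := by rw [integral_const_mul, intervalIntegral.integral_of_le ht.le]

end DiffusiveRepresentation

section Bounds

variable {α x : ℝ}

theorem abs_mittagLeffler_one_le_one (hα1 : 1 < α) (hα2 : α ≤ 2) (hx : x ≤ 0) :
    |mittagLeffler α 1 x| ≤ 1 := by
  have hα : 0 < α := by linarith
  let u : ℝ → ℝ := fun s => mittagLeffler α 1 (x * s ^ α)
  have hu : Continuous u := continuous_mittagLeffler_mul_rpow hα one_pos x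
  let g : ℝ → ℝ := fun s => s ^ (α - 1) * mittagLeffler α α (x * s ^ α)
  have hg : Continuous g := (Real.continuous_rpow_const (by linarith)).mul
    (continuous_mittagLeffler_mul_rpow hα hα x)
  have hfrac {s : ℝ} (hs : 0 < s) : fractionalIntegral (α - 1) u s = g s := by
    rw [fractionalIntegral_mittagLeffler_one hα (by linarith) x hs, add_sub_cancel]
  have hpos : 0 ≤ ∫ s in (0 : ℝ)..1, u s * g s := by
    refine (integral_mul_fractionalIntegral_nonneg hu (q := α - 1) (by linarith) (by linarith)
      one_pos).trans_eq (intervalIntegral.integral_congr_uIoo fun s hs => ?_)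
    rw [uIoo_of_le zero_le_one] at hs
    simp only [hfrac hs.1]
  have henergy : ∫ s in (0 : ℝ)..1, 2 * x * (u s * g s) = u 1 ^ 2 - u 0 ^ 2 :=
    intervalIntegral.integral_eq_sub_of_hasDerivAt_of_le zero_le_one (hu.pow 2).continuousOn
      (fun s hs => ((hasDerivAt_mittagLeffler_one_mul_rpow hα x hs.1).pow 2).congr_deriv
        (by
        simp only [u, g, Nat.cast_ofNat, Nat.add_one_sub_one, pow_one]
        ring))
      (Continuous.intervalIntegrable (by fun_prop) _ _)
  have hu0 : u 0 = 1 := by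
    simp [u, Real.zero_rpow hα.ne', mittagLeffler_zero hα one_pos]
  have hu1 : u 1 = mittagLeffler α 1 x := by simp [u]
  rw [intervalIntegral.integral_const_mul, hu0, hu1] at henergy
  rw [← sq_le_one_iff_abs_le_one]
  linarith [mul_nonpos_of_nonpos_of_nonneg (by linarith : 2 * x ≤ 0) hpos]

theorem abs_mittagLeffler_two_le_one (hα1 : 1 < α) (hα2 : α ≤ 2) (hx : x ≤ 0) :
    |mittagLeffler α 2 x| ≤ 1 := by
  have hmean : ∫ r in (0 : ℝ)..1, mittagLeffler α 1 (x * r ^ α) = mittagLeffler α 2 x := by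
    simpa [one_add_one_eq_two] using
      integral_rpow_mul_mittagLeffler (by linarith : 0 < α) one_pos x one_pos
  have hbound : ∀ r ∈ Ι (0 : ℝ) 1, ‖mittagLeffler α 1 (x * r ^ α)‖ ≤ 1 := fun r hr => by
    rw [uIoc_of_le zero_le_one] at hr
    exact abs_mittagLeffler_one_le_one hα1 hα2
      (mul_nonpos_of_nonpos_of_nonneg hx (Real.rpow_nonneg hr.1.le _))
  simpa [hmean] using intervalIntegral.norm_integral_le_of_norm_le_const hbound

theorem abs_mul_mittagLeffler_two_add_le {a b t M : ℝ} (hα1 : 1 < α) (hα2 : α ≤ 2) (hx : x ≤ 0)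
    (ht : 0 ≤ t) (htM : t ≤ M) :
    |a * t * mittagLeffler α 2 x + b * mittagLeffler α 1 x| ≤ M * |a| + |b| := by
  have hE1 := abs_mittagLeffler_one_le_one hα1 hα2 hx
  have hE2 := abs_mittagLeffler_two_le_one hα1 hα2 hx
  have hM := ht.trans htM
  calc |a * t * mittagLeffler α 2 x + b * mittagLeffler α 1 x|
      ≤ |a| * t * |mittagLeffler α 2 x| + |b| * |mittagLeffler α 1 x| := by
        simpa only [abs_mul, abs_of_nonneg ht] using
          abs_add_le (a * t * mittagLeffler α 2 x) (b * mittagLeffler α 1 x)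
    _ ≤ |a| * M * 1 + |b| * 1 := by gcongr
    _ = M * |a| + |b| := by ring

end Bounds

section DominatedConvergence

variable {ι : Type*} {E : ι → Type*} [∀ i, NormedAddCommGroup (E i)] {p : ℝ≥0∞} [Fact (1 ≤ p)]

theorem tendsto_lp_of_dominated {κ : Type*} {l : Filter κ} {F : κ → lp E p} {G : lp E p}
    {B : ι → ℝ} (hp : p ≠ ∞) (hB : Memℓp B p) (hFB : ∀ᶠ k in l, ∀ i, ‖F k i‖ ≤ B i)
    (hlim : ∀ i, Tendsto (fun k => F k i) l (𝓝 (G i))) : Tendsto F l (𝓝 G) := by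
  have hp0 : 0 < p.toReal :=
    ENNReal.toReal_pos (zero_lt_one.trans_le (Fact.out : 1 ≤ p)).ne' hp
  have hsum : Summable fun i => ‖B i + ‖G i‖‖ ^ p.toReal :=
    (hB.add (lp.memℓp G).norm).summable hp0
  have hpow : Tendsto (fun k => ∑' i, ‖(F k - G) i‖ ^ p.toReal) l (𝓝 0) := by
    rw [← tsum_zero (β := ι)]
    refine tendsto_tsum_of_dominated_convergence hsum (fun i => ?_) ?_
    · have h := ((hlim i).sub_const (G i)).norm.rpow_const (.inr hp0.le)
      simpa [Real.zero_rpow hp0.ne'] using h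
    · filter_upwards [hFB] with k hk i
      rw [Real.norm_of_nonneg (by positivity), lp.coeFn_sub, Pi.sub_apply]
      gcongr
      exact (norm_sub_le _ _).trans ((add_le_add_left (hk i) _).trans (Real.le_norm_self _))
  rw [tendsto_iff_norm_sub_tendsto_zero]
  simp_rw [lp.norm_eq_tsum_rpow hp0]
  simpa [Real.zero_rpow (inv_pos.2 hp0).ne'] using
    hpow.rpow_const (p := 1 / p.toReal) (.inr (by positivity))

theorem exists_continuous_lp_of_dominated {X : Type*} [TopologicalSpace X]
    {φ : X → ∀ i, E i} (hp : p ≠ ∞) (hφ : ∀ i, Continuous fun x => φ x i)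
    (hdom : ∀ x, ∃ B : ι → ℝ, Memℓp B p ∧ ∀ᶠ y in 𝓝 x, ∀ i, ‖φ y i‖ ≤ B i) :
    ∃ f : X → lp E p, Continuous f ∧ ∀ x i, f x i = φ x i := by
  have hmem (x : X) : Memℓp (φ x) p := by
    obtain ⟨B, hB, hφB⟩ := hdom x
    exact hB.mono hφB.self_of_nhds
  refine ⟨fun x => ⟨φ x, hmem x⟩, continuous_iff_continuousAt.2 fun x => ?_, fun _ _ => rfl⟩
  obtain ⟨B, hB, hφB⟩ := hdom x
  exact tendsto_lp_of_dominated hp hB hφB fun i => (hφ i).tendsto x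

end DominatedConvergence

theorem continuity_into_l2_general {α : ℝ} (hα1 : 1 < α) (hα2 : α ≤ 2) {ι : Type*} {p : ℝ≥0∞}
    [Fact (1 ≤ p)] (hp : p ≠ ∞) (l : ι → ℝ) (hl : ∀ i, 0 ≤ l i) (a b : lp (fun _ : ι => ℝ) p) :
    ∃ f : ℝ≥0 → lp (fun _ : ι => ℝ) p,
      Continuous f ∧
      (∀ t i, f t i = a i * t * mittagLeffler α 2 (-(l i) * (t : ℝ) ^ α)
        + b i * mittagLeffler α 1 (-(l i) * (t : ℝ) ^ α)) ∧
      f 0 = b := by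
  have hα : 0 < α := by linarith
  have hx (t : ℝ≥0) (i : ι) : -(l i) * (t : ℝ) ^ α ≤ 0 :=
    mul_nonpos_of_nonpos_of_nonneg (neg_nonpos.2 (hl i)) (by positivity)
  have hE1 (i : ι) := continuous_mittagLeffler_mul_rpow hα one_pos (-(l i))
  have hE2 (i : ι) := continuous_mittagLeffler_mul_rpow hα two_pos (-(l i))
  obtain ⟨f, hf, hfφ⟩ := exists_continuous_lp_of_dominated hp
    (φ := fun (t : ℝ≥0) i => a i * t * mittagLeffler α 2 (-(l i) * (t : ℝ) ^ α)
      + b i * mittagLeffler α 1 (-(l i) * (t : ℝ) ^ α))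
    (fun i => ((continuous_const.mul NNReal.continuous_coe).mul
      ((hE2 i).comp NNReal.continuous_coe)).add
        (continuous_const.mul ((hE1 i).comp NNReal.continuous_coe)))
    fun t => ⟨_, ((lp.memℓp a).norm.const_mul ((t : ℝ) + 1)).add (lp.memℓp b).norm, by
      filter_upwards [Iio_mem_nhds (lt_add_one t)] with s hs i
      exact abs_mul_mittagLeffler_two_add_le hα1 hα2 (hx s i) s.2 (mod_cast le_of_lt hs)⟩
  refine ⟨f, hf, hfφ, lp.ext (funext fun i => ?_)⟩
  simp [hfφ, Real.zero_rpow hα.ne', mittagLeffler_zero hα one_pos]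

/-- Let `α ∈ (3/2, 2)`, `T > 0`, `(λ_n)` positive reals and
`(a_n), (b_n) ∈ ℓ²(ℕ)`. Then the map
`t ↦ (a_n t E_{α,2}(−λ_n t^α) + b_n E_α(−λ_n t^α))_n` is continuous from `[0,T]`
into `ℓ²(ℕ)`, and its value at `t = 0` is the sequence `(b_n)`. -/
theorem continuity_into_l2 (α T : ℝ) (hα1 : 3 / 2 < α) (hα2 : α < 2) (hT : 0 < T)
    (l : ℕ → ℝ) (hl : ∀ n, 0 < l n)
    (a b : lp (fun _ : ℕ => ℝ) 2) :
    ∃ f : ℝ → lp (fun _ : ℕ => ℝ) 2,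
      ContinuousOn f (Set.Icc 0 T) ∧
      (∀ t ∈ Set.Icc (0 : ℝ) T, ∀ n : ℕ,
        f t n = a n * t * mittagLeffler α 2 (-(l n) * t ^ α)
          + b n * mittagLeffler α 1 (-(l n) * t ^ α)) ∧
      f 0 = b := by
  obtain ⟨f, hf, hfφ, hf0⟩ := continuity_into_l2_general (by linarith) hα2.le
    ENNReal.ofNat_ne_top l (fun n => (hl n).le) a b
  exact ⟨fun t => f t.toNNReal, (hf.comp continuous_real_toNNReal).continuousOn,
    fun t ht n => by simpa [Real.coe_toNNReal t ht.1] using hfφ t.toNNReal n, by simpa using hf0⟩
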